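/- Adding a generic hyperplane destroys asphericity: let α_1,…,α_n be nonzero linear forms on ℝ^ℓ (ℓ ≥ 3) with ⋂_{i=1}^n ker α_i = {0}, and let β be a nonzero linear form such that for every X ∈ L(A) with X ≠ {0}, X ⊄ ker β (equivalently dim(X ∩ ker β) = dim X − 1). Then the arrangement A ∪ {ker β} admits a locally consistent but globally inconsistent system of half-spaces; consequently π_{ℓ−1}(M(A ∪ {ker β})) ≠ 0 and M(A ∪ {ker β}) is not aspherical. -/

import Mathlib

noncomputable section

/-- Real vector space `ℝ^ℓ`. -/
abbrev Vsp (ℓ : ℕ) : Type := EuclideanSpace ℝ (Fin ℓ)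

/-- The system of half-spaces determined by `ε` is consistent at the intersection
`X = ⋂ i ∈ I, ker (α i)`. -/
def ConsistentAt {ℓ n : ℕ} (α : Fin n → (Vsp ℓ →ₗ[ℝ] ℝ)) (ε : Fin n → ℝ)
    (I : Finset (Fin n)) : Prop :=
  {x : Vsp ℓ | ∀ j : Fin n,
      (⋂ i ∈ I, (LinearMap.ker (α i) : Set (Vsp ℓ))) ⊆ (LinearMap.ker (α j) : Set (Vsp ℓ)) →
      0 < ε j * α j x}.Nonempty

/-- The system of half-spaces is locally consistent: consistent at every nonzero
intersection of hyperplanes. -/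
def LocallyConsistent {ℓ n : ℕ} (α : Fin n → (Vsp ℓ →ₗ[ℝ] ℝ)) (ε : Fin n → ℝ) : Prop :=
  ∀ I : Finset (Fin n),
    (⋂ i ∈ I, (LinearMap.ker (α i) : Set (Vsp ℓ))) ≠ {0} → ConsistentAt α ε I

/-- The `ℂ`-linear extension of a real linear form, evaluated at `z ∈ ℂ^ℓ`. -/
def cLin {ℓ : ℕ} (α : Vsp ℓ →ₗ[ℝ] ℝ) (z : Fin ℓ → ℂ) : ℂ :=
  (α (WithLp.toLp 2 (fun j => (z j).re)) : ℂ) + Complex.I * (α (WithLp.toLp 2 (fun j => (z j).im)) : ℂ)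

/-- The complexified complement `M(A) ⊆ ℂ^ℓ`. -/
def MA {ℓ n : ℕ} (α : Fin n → (Vsp ℓ →ₗ[ℝ] ℝ)) : Set (Fin ℓ → ℂ) :=
  {z | ∀ i, cLin (α i) z ≠ 0}

/-!
A locally consistent but globally inconsistent system of half-spaces yields a nontrivial sphere
in the complement. After changing signs, all half-spaces are `α j > 0`. Local consistency and a
partition of unity give a continuous `y` on the unit sphere with `α j (y x) > 0` whenever
`α j x = 0`, so that `x ↦ x + i y x` is a sphere in the complement.

Suppose that it extends to a map `F` of the ball. Lift the arguments `θ j` of `-i α j (F x)`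
continuously to the ball, with principal values on the sphere, and put `ψ = max θ j` and
`Φ = Re (i exp (-i ψ) F)`. At a maximising `j` one has `α j Φ = -|α j F| < 0`, hence `Φ` has no
zero. If `Φ x` were a negative multiple of `x` on the sphere, then `α j x > 0` and so `ψ x < 0`,
whereas global inconsistency provides `k` with `α k x ≤ 0`, i.e. `ψ x ≥ θ k ≥ 0`. A nowhere
vanishing field that never points towards `-x` on the sphere contradicts Brouwer's theorem, which
is obtained by the volume argument of Milnor and Rogers.

For `A ∪ {ker β}` the half-spaces are the sides of a chamber of `A` on which `β > 0`, together
with `β < 0`: by genericity every nonzero intersection contains a direction along which `β` can be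
decreased without leaving the relevant sides.
-/

section Brouwer

open Set Metric MeasureTheory Topology Filter

variable {E : Type*} [NormedAddCommGroup E]

section Determinant

variable [NormedSpace ℝ E]

lemma det_ne_zero_of_isUnit {A : E →L[ℝ] E} (hA : IsUnit A) : A.det ≠ 0 :=
  ((hA.map ContinuousLinearMap.toLinearMapRingHom).map LinearMap.det).ne_zero

lemma continuous_det_one_add_smul_fderiv {k : E → E} (hk : ContDiff ℝ 1 k) (t : ℝ) :
    Continuous fun x ↦ (1 + t • fderiv ℝ k x).det := by
  have := hk.continuous_fderiv one_ne_zero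
  exact ContinuousLinearMap.continuous_det.comp (by fun_prop)

variable [FiniteDimensional ℝ E]

lemma exists_polynomial_eval_eq_det_one_add_smul (A : E →L[ℝ] E) :
    ∃ P : Polynomial ℝ, P.natDegree ≤ Module.finrank ℝ E ∧
      ∀ t : ℝ, P.eval t = (1 + t • A).det := by
  let M := LinearMap.toMatrix (Module.finBasis ℝ E) (Module.finBasis ℝ E) A
  refine ⟨((Polynomial.X : Polynomial ℝ) • M.map Polynomial.C +
      (1 : Matrix _ _ ℝ).map Polynomial.C).det, ?_, fun t ↦ ?_⟩
  · simpa using Polynomial.natDegree_det_X_add_C_le M 1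
  · have hM : 1 + t • M = LinearMap.toMatrix (Module.finBasis ℝ E) (Module.finBasis ℝ E)
        ((1 + t • A : E →L[ℝ] E) : E →ₗ[ℝ] E) := by
      simp [M, LinearMap.toMatrix_one]
    rw [ContinuousLinearMap.det, ← LinearMap.det_toMatrix (Module.finBasis ℝ E), ← hM,
      ← Polynomial.coe_evalRingHom, RingHom.map_det]
    congr 1
    ext i j
    simp [Matrix.one_apply, apply_ite, add_comm, mul_comm t]

/-- Since `t ↦ det (1 + t • A)` is a polynomial of degree at most `dim E`, Lagrange interpolation at
the nodes `s` recovers its value at `1`. -/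
lemma exists_det_one_add_eq_sum {s : Finset ℝ} (hs : Module.finrank ℝ E < s.card) :
    ∃ c : ℝ → ℝ, ∑ t ∈ s, c t = 1 ∧
      ∀ A : E →L[ℝ] E, (1 + A).det = ∑ t ∈ s, c t * (1 + t • A).det := by
  refine ⟨fun t ↦ (Lagrange.basis s id t).eval 1, ?_, fun A ↦ ?_⟩
  · rw [← Polynomial.eval_finsetSum, Lagrange.sum_basis (injOn_id _)
      (Finset.card_pos.1 (Nat.zero_lt_of_lt hs)), Polynomial.eval_one]
  · obtain ⟨P, hPdeg, hP⟩ := exists_polynomial_eval_eq_det_one_add_smul A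
    have hinterp := Lagrange.eq_interpolate (f := P) (v := id) (s := s)
      (injOn_id _)
      (Polynomial.degree_le_natDegree.trans_lt (by exact_mod_cast hPdeg.trans_lt hs))
    calc (1 + A).det = P.eval 1 := by rw [hP, one_smul]
      _ = ∑ t ∈ s, (Lagrange.basis s id t).eval 1 * (1 + t • A).det := by
        conv_lhs => rw [hinterp]
        simp [Lagrange.interpolate_apply, Polynomial.eval_finsetSum, hP, mul_comm]

lemma det_one_add_pos {A : E →L[ℝ] E} (hA : ‖A‖ < 1) : 0 < (1 + A).det := by
  have : CompleteSpace E := FiniteDimensional.complete ℝ E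
  have hne : ∀ s ∈ Icc (0 : ℝ) 1, (1 + s • A).det ≠ 0 := fun s hs ↦ by
    have hsA : ‖-(s • A)‖ < 1 := by
      rw [norm_neg, norm_smul, Real.norm_of_nonneg hs.1]
      exact (mul_le_of_le_one_left (norm_nonneg A) hs.2).trans_lt hA
    simpa using det_ne_zero_of_isUnit (Units.oneSub _ hsA).isUnit
  have hcont : Continuous fun s : ℝ ↦ (1 + s • A).det :=
    ContinuousLinearMap.continuous_det.comp (by fun_prop)
  have hone : (1 + (0 : ℝ) • A).det = 1 := by
    rw [zero_smul, add_zero]; exact LinearMap.det_id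
  by_contra! hneg
  obtain ⟨s, hs, hs0⟩ := intermediate_value_Icc' zero_le_one hcont.continuousOn
    (show (0 : ℝ) ∈ Icc _ _ from ⟨by simpa using hneg, hone ▸ zero_le_one⟩)
  exact hne s hs hs0

end Determinant

section Lipschitz

variable [NormedSpace ℝ E]

lemma lipschitzWith_of_lipschitzOnWith_closedBall {F : Type*} [NormedAddCommGroup F]
    {k : E → F} {R : ℝ} {K : NNReal}
    (hk : LipschitzOnWith K k (closedBall 0 R)) (h0 : ∀ x, R ≤ ‖x‖ → k x = 0) :
    LipschitzWith K k := by
  have across : ∀ x y, ‖x‖ ≤ R → R ≤ ‖y‖ → dist (k x) (k y) ≤ K * dist x y := by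
    intro x y hx hy
    obtain ⟨z, hz, hzR⟩ : ∃ z ∈ segment ℝ x y, ‖z‖ = R :=
      (convex_segment x y).isPreconnected.intermediate_value (left_mem_segment ℝ x y)
        (right_mem_segment ℝ x y) continuous_norm.continuousOn ⟨hx, hy⟩
    calc dist (k x) (k y) = dist (k x) (k z) := by rw [h0 z hzR.ge, h0 y hy]
      _ ≤ K * dist x z := hk.dist_le_mul x (by simpa using hx) z (by simpa using hzR.le)
      _ ≤ K * dist x y := by
        gcongr
        linarith [dist_add_dist_of_mem_segment hz, dist_nonneg (x := z) (y := y)]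
  refine LipschitzWith.of_dist_le_mul fun x y ↦ ?_
  rcases le_total ‖x‖ R with hx | hx <;> rcases le_total ‖y‖ R with hy | hy
  · exact hk.dist_le_mul x (by simpa using hx) y (by simpa using hy)
  · exact across x y hx hy
  · rw [dist_comm, dist_comm x]
    exact across y x hy hx
  · rw [h0 x hx, h0 y hy, dist_self]
    positivity

lemma bijective_id_add_smul [CompleteSpace E] {k : E → E} {K : NNReal} (hk : LipschitzWith K k)
    {t : ℝ} (ht : |t| * K < 1) : Function.Bijective fun x ↦ x + t • k x := by
  have happ : ApproximatesLinearOn (fun x ↦ x + t • k x)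
      ((ContinuousLinearEquiv.refl ℝ E : E ≃L[ℝ] E) : E →L[ℝ] E) univ (‖t‖₊ * K) := by
    intro x _ y _
    have hdiff : x + t • k x - (y + t • k y) - (x - y) = t • (k x - k y) := by module
    simp only [ContinuousLinearEquiv.coe_refl, ContinuousLinearMap.coe_id', id_eq, hdiff, norm_smul,
      NNReal.coe_mul, coe_nnnorm, mul_assoc]
    gcongr
    exact hk.norm_sub_le x y
  have hsmall : Subsingleton E ∨
      ‖t‖₊ * K < ‖((ContinuousLinearEquiv.refl ℝ E).symm : E →L[ℝ] E)‖₊⁻¹ := by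
    rcases subsingleton_or_nontrivial E with hE | hE
    · exact Or.inl hE
    · refine Or.inr ?_
      simpa [← NNReal.coe_lt_coe] using ht
  exact ⟨injOn_univ.1 (happ.injOn hsmall), happ.surjective hsmall⟩

end Lipschitz

lemma image_eq_of_bijective_of_eqOn_compl {X : Type*} {f : X → X} (hf : Function.Bijective f)
    {s : Set X} (hs : EqOn f id sᶜ) : f '' s = s := by
  rw [← compl_inj_iff, ← image_compl_eq hf, hs.image_eq, image_id]

lemma exists_finset_card_eq_forall_abs_mul_lt_one (K : NNReal) (d : ℕ) :
    ∃ s : Finset ℝ, s.card = d ∧ ∀ t ∈ s, |t| * K < 1 := by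
  obtain ⟨s, hs, hcard⟩ := (Ioo_infinite
    (show (0 : ℝ) < 1 / (K + 1) by positivity)).exists_subset_card_eq d
  refine ⟨s, hcard, fun t ht ↦ ?_⟩
  obtain ⟨ht0, htK⟩ := hs ht
  rw [lt_div_iff₀ (by positivity)] at htK
  rw [abs_of_pos ht0]
  linarith

section VolumeOfBall

variable [NormedSpace ℝ E] [FiniteDimensional ℝ E] [MeasurableSpace E] [BorelSpace E]
  (μ : Measure E) [μ.IsAddHaarMeasure]

lemma integrableOn_ball_of_continuous {f : E → ℝ} (hf : Continuous f) (R : ℝ) :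
    IntegrableOn f (ball 0 R) μ :=
  (hf.continuousOn.integrableOn_compact (isCompact_closedBall 0 R)).mono_set
    ball_subset_closedBall

lemma integral_det_eq_measureReal_image {h : E → E} {h' : E → E →L[ℝ] E} {s : Set E}
    (hs : MeasurableSet s) (hh : ∀ x ∈ s, HasFDerivWithinAt h (h' x) s x) (hinj : InjOn h s)
    (hpos : ∀ x ∈ s, 0 < (h' x).det) : ∫ x in s, (h' x).det ∂μ = μ.real (h '' s) := by
  have := integral_image_eq_integral_abs_det_fderiv_smul μ hs hh hinj (fun _ ↦ (1 : ℝ))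
  simp only [setIntegral_const, smul_eq_mul, mul_one] at this
  rw [this]
  exact setIntegral_congr_fun hs fun x hx ↦ (abs_of_pos (hpos x hx)).symm

lemma integral_det_one_add_smul_fderiv_eq_measureReal_ball {k : E → E} {R : ℝ} {K : NNReal}
    (hk : ContDiff ℝ 1 k) (hK : LipschitzOnWith K k (closedBall 0 R))
    (hS : ∀ x, ‖x‖ = R → k x = 0) {t : ℝ} (ht : |t| * K < 1) :
    ∫ x in ball 0 R, (1 + t • fderiv ℝ k x).det ∂μ = μ.real (ball (0 : E) R) := by
  let k₀ : E → E := (ball 0 R).indicator k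
  have hk₀ : EqOn k₀ k (closedBall 0 R) := fun x hx ↦ by
    rcases (mem_closedBall.1 hx).lt_or_eq with hx | hx
    · exact indicator_of_mem (mem_ball.2 hx) k
    · rw [hS x (by simpa using hx)]
      exact indicator_of_notMem (by simp [hx]) k
  have hzero : ∀ x, R ≤ ‖x‖ → k₀ x = 0 := fun x hx ↦
    indicator_of_notMem (by simpa using hx) k
  have hlip : LipschitzWith K k₀ := lipschitzWith_of_lipschitzOnWith_closedBall
    (fun x hx y hy ↦ by rw [hk₀ hx, hk₀ hy]; exact hK hx hy) hzero
  have hbij := bijective_id_add_smul hlip ht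
  have himage : (fun x ↦ x + t • k₀ x) '' ball 0 R = ball 0 R :=
    image_eq_of_bijective_of_eqOn_compl hbij fun x hx ↦ by simp [hzero x (by simpa using hx)]
  have hderiv : ∀ x ∈ ball (0 : E) R,
      HasFDerivWithinAt (fun x ↦ x + t • k₀ x) (1 + t • fderiv ℝ k x) (ball 0 R) x := fun x hx ↦
    ((hasFDerivAt_id x).add
      ((hk.differentiable one_ne_zero x).hasFDerivAt.const_smul t)).hasFDerivWithinAt.congr
      (fun y hy ↦ by simp [hk₀ (ball_subset_closedBall hy)])
      (by simp [hk₀ (ball_subset_closedBall hx)])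
  have hpos : ∀ x ∈ ball (0 : E) R, 0 < (1 + t • fderiv ℝ k x).det := fun x hx ↦ by
    refine det_one_add_pos (lt_of_le_of_lt ?_ ht)
    rw [norm_smul, Real.norm_eq_abs]
    gcongr
    exact norm_fderiv_le_of_lipschitzOn ℝ
      (mem_of_superset (isOpen_ball.mem_nhds hx) ball_subset_closedBall) hK
  rw [integral_det_eq_measureReal_image μ measurableSet_ball hderiv hbij.injective.injOn hpos,
    himage]

lemma integral_det_one_add_fderiv_eq_measureReal_ball {k : E → E} {R : ℝ} (hk : ContDiff ℝ 1 k)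
    (hS : ∀ x, ‖x‖ = R → k x = 0) :
    ∫ x in ball 0 R, (1 + fderiv ℝ k x).det ∂μ = μ.real (ball (0 : E) R) := by
  obtain ⟨K, hK⟩ := hk.contDiffOn.exists_lipschitzOnWith one_ne_zero
    (convex_closedBall (0 : E) R) (isCompact_closedBall 0 R)
  obtain ⟨s, hcard, hs⟩ := exists_finset_card_eq_forall_abs_mul_lt_one K (Module.finrank ℝ E + 1)
  obtain ⟨c, hc, hdet⟩ := exists_det_one_add_eq_sum (E := E) (s := s) (by omega)
  calc ∫ x in ball 0 R, (1 + fderiv ℝ k x).det ∂μ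
      = ∑ t ∈ s, c t * ∫ x in ball 0 R, (1 + t • fderiv ℝ k x).det ∂μ := by
        rw [funext fun x ↦ hdet (fderiv ℝ k x), integral_finsetSum _ fun t _ ↦
          (integrableOn_ball_of_continuous μ (continuous_det_one_add_smul_fderiv hk t) R).const_mul
            (c t)]
        simp only [integral_const_mul]
    _ = ∑ t ∈ s, c t * μ.real (ball (0 : E) R) :=
        Finset.sum_congr rfl fun t ht ↦ by
          rw [integral_det_one_add_smul_fderiv_eq_measureReal_ball μ hk hK hS (hs t ht)]
    _ = μ.real (ball (0 : E) R) := by rw [← Finset.sum_mul, hc, one_mul]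

end VolumeOfBall

section Retraction

variable [InnerProductSpace ℝ E] [FiniteDimensional ℝ E]

lemma det_fderiv_eq_zero_of_norm_eq {r : E → E} {R : ℝ} (hR : R ≠ 0) (hr : ∀ x, ‖r x‖ = R)
    {x : E} (hx : DifferentiableAt ℝ r x) : (fderiv ℝ r x).det = 0 := by
  by_contra hdet
  obtain ⟨v, hv⟩ := (LinearMap.equivOfDetNeZero (fderiv ℝ r x : E →ₗ[ℝ] E) hdet).surjective (r x)
  replace hv : fderiv ℝ r x v = r x := hv
  have hconst : (fun y ↦ inner ℝ (r y) (r y)) = fun _ ↦ R ^ 2 := by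
    funext y
    rw [real_inner_self_eq_norm_sq, hr]
  have hderiv := fderiv_inner_apply ℝ hx hx v
  rw [hconst, hv, real_inner_self_eq_norm_sq, hr] at hderiv
  simp only [fderiv_fun_const, Pi.zero_apply, zero_apply] at hderiv
  exact hR (pow_eq_zero_iff two_ne_zero |>.1 (by linarith))

variable [MeasurableSpace E] [BorelSpace E]

lemma not_contDiff_retraction_onto_sphere {r : E → E} {R : ℝ} (hR : 0 < R) (hr : ∀ x, ‖r x‖ = R)
    (hS : ∀ x, ‖x‖ = R → r x = x) : ¬ ContDiff ℝ 1 r := fun hC ↦ by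
  have hvol := integral_det_one_add_fderiv_eq_measureReal_ball volume
    (k := fun x ↦ r x - x) (R := R) (hC.sub contDiff_id) fun x hx ↦ by rw [hS x hx, sub_self]
  have hzero : ∀ x, (1 + fderiv ℝ (fun x ↦ r x - x) x).det = 0 := fun x ↦ by
    have hx := hC.differentiable one_ne_zero x
    have hfd : fderiv ℝ (fun x ↦ r x - x) x = fderiv ℝ r x - 1 :=
      (hx.hasFDerivAt.sub (hasFDerivAt_id x)).fderiv
    rw [hfd, add_sub_cancel]
    exact det_fderiv_eq_zero_of_norm_eq hR.ne' hr hx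
  simp only [hzero, integral_zero] at hvol
  exact (ENNReal.toReal_pos (measure_ball_pos volume (0 : E) hR).ne' measure_ball_lt_top.ne).ne hvol

end Retraction

lemma exists_eq_zero_of_eventuallyEq_cocompact_id_of_inner [InnerProductSpace ℝ E]
    [FiniteDimensional ℝ E] {G : E → E} (hG : Continuous G) (hid : G =ᶠ[cocompact E] id) :
    ∃ x, G x = 0 := by
  by_contra! h0
  obtain ⟨ρ, hρ0, hρ⟩ : ∃ ρ ≥ 0, ∀ x, ρ < ‖x‖ → G x = x := by
    obtain ⟨ρ, hρ⟩ := (mem_cocompact_iff_closedBall_compl_subset 0).1 hid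
    exact ⟨max ρ 0, le_max_right _ _, fun x hx ↦ hρ (by simpa using (max_lt_iff.1 hx).1)⟩
  obtain ⟨g, hg, hgG, hgS, -⟩ := hG.exists_contDiff_approx_and_eqOn 1 (ε := fun x ↦ ‖G x‖)
    hG.norm (fun x ↦ norm_pos_iff.2 (h0 x)) (S := {x | ρ + 1 ≤ ‖x‖}) (U := {x | ρ < ‖x‖})
    (isClosed_le continuous_const continuous_norm)
    ((isOpen_lt continuous_const continuous_norm).mem_nhdsSet.2 fun x hx ↦ by
      rw [mem_ofPred_eq] at hx ⊢; linarith)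
    (contDiffOn_id.congr hρ)
  have hg0 : ∀ x, g x ≠ 0 := fun x hx ↦ by simpa [hx] using hgG x
  borelize E
  refine not_contDiff_retraction_onto_sphere (r := fun x ↦ ((ρ + 1) * ‖g x‖⁻¹) • g x) (R := ρ + 1)
    (by positivity) (fun x ↦ ?_) (fun x hx ↦ ?_)
    ((contDiff_const.mul ((hg.norm ℝ hg0).inv fun x ↦ norm_ne_zero_iff.2 (hg0 x))).smul hg)
  · have := norm_ne_zero_iff.2 (hg0 x)
    rw [norm_smul, norm_mul, norm_inv, norm_norm, Real.norm_of_nonneg (by positivity)]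
    field_simp
  · have hgx : g x = x := (hgS hx.ge).trans (hρ x (by linarith))
    simp only [hgx, hx]
    rw [mul_inv_cancel₀ (by positivity), one_smul]

variable [NormedSpace ℝ E]

lemma exists_eq_zero_of_eventuallyEq_cocompact_id [FiniteDimensional ℝ E] {G : E → E}
    (hG : Continuous G) (hid : G =ᶠ[cocompact E] id) : ∃ x, G x = 0 := by
  let e : E ≃L[ℝ] EuclideanSpace ℝ (Fin (Module.finrank ℝ E)) := toEuclidean
  obtain ⟨y, hy⟩ := exists_eq_zero_of_eventuallyEq_cocompact_id_of_inner
    (G := fun y ↦ e (G (e.symm y))) (by fun_prop) <| by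
      filter_upwards [e.symm.toHomeomorph.isClosedEmbedding.tendsto_cocompact.eventually hid]
        with y hy
      exact (congrArg e hy).trans (e.apply_symm_apply y)
  exact ⟨e.symm y, e.map_eq_zero_iff.1 hy⟩

lemma smul_add_smul_ne_zero_of_not_sameRay_neg {u v : E} (huv : ¬ SameRay ℝ u (-v)) {a b : ℝ}
    (ha : 0 ≤ a) (hb : 0 ≤ b) (hab : 0 < a + b) : a • u + b • v ≠ 0 := by
  intro h
  rcases ha.eq_or_lt with rfl | ha
  · obtain rfl : v = 0 := by
      simpa [show b ≠ 0 by linarith] using h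
    simp at huv
  rcases hb.eq_or_lt with rfl | hb
  · obtain rfl : u = 0 := by simpa [ha.ne'] using h
    simp at huv
  · exact huv (Or.inr <| Or.inr ⟨a, b, ha, hb, by rw [smul_neg, eq_neg_of_add_eq_zero_left h]⟩)

/-- The Poincaré–Bohl form of Brouwer's fixed point theorem. -/
theorem exists_eq_zero_of_forall_not_sameRay_neg [FiniteDimensional ℝ E] {G : E → E}
    (hG : Continuous G) (hS : ∀ x, ‖x‖ = 1 → ¬ SameRay ℝ (G x) (-x)) : ∃ x, G x = 0 := by
  by_contra! h0
  let proj : E → E := fun x ↦ (max 1 ‖x‖)⁻¹ • x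
  have hproj : Continuous proj :=
    ((by fun_prop : Continuous fun x : E ↦ max 1 ‖x‖).inv₀ fun x ↦ by positivity).smul continuous_id
  let a : E → ℝ := fun x ↦ max 0 (min 1 (2 - ‖x‖))
  obtain ⟨x, hx⟩ := exists_eq_zero_of_eventuallyEq_cocompact_id
    (G := fun x ↦ a x • G (proj x) + (1 - a x) • x) (by fun_prop) <| by
      filter_upwards [tendsto_norm_cocompact_atTop.eventually_ge_atTop 2] with x hx
      have ha : a x = 0 := by simp [a, hx]
      simp [ha]
  rcases le_or_gt ‖x‖ 1 with hx1 | hx1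
  · have ha : a x = 1 := by simp [a, show 1 ≤ 2 - ‖x‖ by linarith]
    simp [ha, proj, hx1, h0] at hx
  · have hsmul : x = ‖x‖ • proj x := by
      simp only [proj, max_eq_right hx1.le]
      rw [smul_inv_smul₀ (by positivity)]
    have hnorm : ‖proj x‖ = 1 := by
      simp only [proj, max_eq_right hx1.le]
      exact NormedSpace.norm_normalize_eq_one_iff.2 (norm_pos_iff.1 (by linarith))
    have ha1 : a x ≤ 1 := by simp [a]
    rw [show (1 - a x) • x = ((1 - a x) * ‖x‖) • proj x by rw [mul_smul, ← hsmul]] at hx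
    refine smul_add_smul_ne_zero_of_not_sameRay_neg (hS _ hnorm) (le_max_left _ _)
      (mul_nonneg (sub_nonneg.2 ha1) (norm_nonneg x)) ?_ hx
    nlinarith [show 0 ≤ a x from le_max_left _ _]

end Brouwer

section SphereMaps

open Set Metric Topology ContinuousMap
open scoped unitInterval

variable {E X Y : Type*} [NormedAddCommGroup E] [NormedSpace ℝ E] [TopologicalSpace X]
  [TopologicalSpace Y]

/-- The radial projection to the unit sphere of a nowhere vanishing continuous map. -/
def normalizeMap (f : C(Y, E)) (hf : ∀ y, f y ≠ 0) : C(Y, sphere (0 : E) 1) where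
  toFun y := ⟨NormedSpace.normalize (f y),
    mem_sphere_zero_iff_norm.2 (NormedSpace.norm_normalize_eq_one_iff.2 (hf y))⟩
  continuous_toFun := ((f.continuous.norm.inv₀ fun y ↦ norm_ne_zero_iff.2 (hf y)).smul
    f.continuous).subtype_mk _

@[simp]
lemma coe_normalizeMap (f : C(Y, E)) (hf : ∀ y, f y ≠ 0) (y : Y) :
    (normalizeMap f hf y : E) = NormedSpace.normalize (f y) :=
  rfl

lemma normalizeMap_homotopic_of_not_sameRay_neg {f : C(Y, E)} (hf : ∀ y, f y ≠ 0)
    {g : C(Y, sphere (0 : E) 1)} (h : ∀ y, ¬ SameRay ℝ (f y) (-(g y : E))) :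
    (normalizeMap f hf).Homotopic g := by
  let segmentMap : C(I × Y, E) := ⟨fun p ↦ (1 - (p.1 : ℝ)) • f p.2 + (p.1 : ℝ) • (g p.2 : E), by
    fun_prop⟩
  have hne : ∀ p, segmentMap p ≠ 0 := fun p ↦
    smul_add_smul_ne_zero_of_not_sameRay_neg (h p.2) (sub_nonneg.2 p.1.2.2) p.1.2.1 (by simp)
  exact ⟨⟨normalizeMap segmentMap hne, fun y ↦ Subtype.ext (by simp [segmentMap]),
    fun y ↦ Subtype.ext (by
      simp [segmentMap,
        NormedSpace.normalize_eq_self_of_norm_eq_one (mem_sphere_zero_iff_norm.1 (g y).2)])⟩⟩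

lemma exists_extension_of_nullhomotopic {φ : C(sphere (0 : E) 1, X)} (hφ : φ.Nullhomotopic) :
    ∃ F : C(E, X), ∀ w : sphere (0 : E) 1, F w = φ w := by
  classical
  obtain ⟨c, ⟨H⟩⟩ := hφ
  let time : E → I := fun x ↦ projIcc 0 1 zero_le_one (2 - 2 * ‖x‖)
  let F₀ : C(({0}ᶜ : Set E), X) :=
    ⟨fun x ↦ H (time x, normalizeMap ⟨Subtype.val, continuous_subtype_val⟩ (fun y ↦ y.2) x),
      by fun_prop⟩
  let F : E → X := fun x ↦ if hx : x ∈ ({0}ᶜ : Set E) then F₀ ⟨x, hx⟩ else c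
  have hF_compl : ContinuousOn F {0}ᶜ := by
    rw [continuousOn_iff_continuous_domRestrict]
    exact F₀.continuous.congr fun x ↦ by simp only [F, domRestrict_apply, x.2, dite_true]
  have hF_ball : ContinuousOn F (ball 0 (1 / 2)) := by
    refine (continuousOn_const (c := c)).congr fun x hx ↦ ?_
    have htime : time x = 1 := projIcc_of_right_le _ (by linarith [mem_ball_zero_iff.1 hx])
    simp only [F, F₀, coe_mk, htime, H.apply_one, const_apply, dite_eq_ite, ite_self]
  refine ⟨⟨F, continuous_iff_continuousAt.2 fun x ↦ ?_⟩, fun w ↦ ?_⟩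
  · by_cases hx : x = 0
    · exact hF_ball.continuousAt (isOpen_ball.mem_nhds (by simp [hx]))
    · exact hF_compl.continuousAt (isOpen_compl_singleton.mem_nhds hx)
  · have hw : ‖(w : E)‖ = 1 := mem_sphere_zero_iff_norm.1 w.2
    have htime : time w = 0 := projIcc_of_le_left _ (by linarith)
    have hnormalize : NormedSpace.normalize (w : E) = w :=
      NormedSpace.normalize_eq_self_of_norm_eq_one hw
    calc F w = F₀ ⟨w, ne_zero_of_mem_unit_sphere w⟩ := dif_pos _
      _ = φ w := by
        simp only [F₀, coe_mk, htime, H.apply_zero]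
        exact congrArg φ (Subtype.ext hnormalize)

lemma nullhomotopic_of_exists_extension {Z : Type*} [TopologicalSpace Z] [ContractibleSpace Z]
    {s : Set Z} {φ : C(s, X)} (hφ : ∃ F : C(Z, X), ∀ w : s, F w = φ w) : φ.Nullhomotopic := by
  obtain ⟨F, hF⟩ := hφ
  have hfac : φ = (F.comp (ContinuousMap.id Z)).comp ⟨Subtype.val, continuous_subtype_val⟩ :=
    ContinuousMap.ext fun w ↦ (hF w).symm
  rw [hfac]
  exact ((id_nullhomotopic Z).comp_right F).comp_left _

end SphereMaps

section CubeSphere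

open Set Metric Topology ContinuousMap
open scoped unitInterval Topology.Homotopy

variable {d : ℕ} {X : Type*} [TopologicalSpace X]

/-- The boundary of the `(d + 1)`-dimensional cube `[-1, 1] × [-1, 1]^d`, as the unit sphere of
the sup norm: this is the form in which spheres and the cubes of `HomotopyGroup` are compared. -/
abbrev CubeSphere (d : ℕ) : Type := sphere (0 : ℝ × (Fin d → ℝ)) 1

lemma max_abs_norm_eq_one (w : CubeSphere d) : max |w.1.1| ‖w.1.2‖ = 1 :=
  mem_sphere_zero_iff_norm.1 w.2

lemma abs_fst_eq_one_or_norm_snd_eq_one (w : CubeSphere d) : |w.1.1| = 1 ∨ ‖w.1.2‖ = 1 := by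
  have := max_abs_norm_eq_one w
  grind

/-- The centre `(-1, 0)` of the bottom face. -/
def bottomCenter (d : ℕ) : CubeSphere d := ⟨(-1, 0), by simp [Prod.norm_def]⟩

/-- The parameter of `collapse`: it is `0` at the centre of the top face and `1` on the lower half
and on the sides of the cube. -/
def collapseParam (w : ℝ × (Fin d → ℝ)) : ℝ := min 1 (max ‖w.2‖ (1 - w.1))

/-- The map `collapse` before its radial projection to the sphere. -/
def collapseVec : C(ℝ × (Fin d → ℝ), ℝ × (Fin d → ℝ)) where
  toFun w := (1 - 2 * collapseParam w, (1 - collapseParam w) • w.2)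
  continuous_toFun := by unfold collapseParam; fun_prop

lemma collapseVec_ne_zero (w : CubeSphere d) : collapseVec (w : ℝ × (Fin d → ℝ)) ≠ 0 := by
  obtain ⟨⟨h, v⟩, hw⟩ := w
  intro h0
  obtain ⟨h1, h2⟩ := Prod.mk_eq_zero.1 h0
  have hm : collapseParam (h, v) = 1 / 2 := by linarith
  obtain rfl : v = 0 := by
    simpa [hm, show (1 - 2⁻¹ : ℝ) ≠ 0 by norm_num] using h2
  have := max_abs_norm_eq_one ⟨(h, 0), hw⟩
  simp only [collapseParam, norm_zero] at hm this
  grind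

lemma not_sameRay_collapseVec_neg (w : CubeSphere d) :
    ¬ SameRay ℝ (collapseVec (w : ℝ × (Fin d → ℝ))) (-(w : ℝ × (Fin d → ℝ))) := by
  intro hray
  rcases hray with h0 | h0 | ⟨a, b, ha, hb, hab⟩
  · exact collapseVec_ne_zero w h0
  · exact ne_zero_of_mem_unit_sphere w (neg_eq_zero.1 h0)
  obtain ⟨⟨h, v⟩, hw⟩ := w
  obtain ⟨h1, h2⟩ := Prod.ext_iff.1 hab
  simp only [collapseVec, ContinuousMap.coe_mk, Prod.smul_fst, Prod.smul_snd, smul_eq_mul,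
    Prod.fst_neg, Prod.snd_neg] at h1 h2
  have hm : collapseParam (h, v) ≤ 1 := min_le_left _ _
  obtain rfl : v = 0 := by
    have : (a * (1 - collapseParam (h, v)) + b) • v = 0 := by
      rw [add_smul, mul_smul, h2]; module
    have hpos : 0 < a * (1 - collapseParam (h, v)) + b := by
      have := sub_nonneg.2 hm; positivity
    simpa [hpos.ne'] using this
  have habs : |h| = 1 := by
    simpa using abs_fst_eq_one_or_norm_snd_eq_one ⟨(h, 0), hw⟩
  rcases eq_or_eq_neg_of_abs_eq habs with rfl | rfl
  · norm_num [collapseParam] at h1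
    linarith
  · norm_num [collapseParam] at h1
    linarith

/-- The self-map of `CubeSphere d` that stretches the top face over the whole sphere and sends
the lower half and the sides to `bottomCenter d`. -/
def collapse : C(CubeSphere d, CubeSphere d) :=
  normalizeMap (collapseVec.comp ⟨Subtype.val, continuous_subtype_val⟩) collapseVec_ne_zero

lemma collapse_homotopic_id : (collapse (d := d)).Homotopic (ContinuousMap.id _) :=
  normalizeMap_homotopic_of_not_sameRay_neg _ not_sameRay_collapseVec_neg

lemma collapse_eq_bottomCenter {w : CubeSphere d} (hw : ‖w.1.2‖ = 1 ∨ w.1.1 ≤ 0) :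
    collapse w = bottomCenter d := by
  have hm : collapseParam (w : ℝ × (Fin d → ℝ)) = 1 := by
    simp only [collapseParam, min_eq_left_iff, le_max_iff]
    exact hw.imp (·.ge) fun h ↦ by linarith
  refine Subtype.ext ?_
  have : collapseVec (w : ℝ × (Fin d → ℝ)) = bottomCenter d := by
    norm_num [collapseVec, hm, bottomCenter]
  simp only [collapse, coe_normalizeMap, coe_mk, comp_apply, this]
  exact NormedSpace.normalize_eq_self_of_norm_eq_one (mem_sphere_zero_iff_norm.1 (bottomCenter d).2)

lemma exists_homotopic_apply_bottomCenter_eq [PathConnectedSpace X] (φ : C(CubeSphere d, X))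
    (x₀ : X) : ∃ τ : C(CubeSphere d, X), φ.Homotopic τ ∧ τ (bottomCenter d) = x₀ := by
  let γ : Path (φ (bottomCenter d)) x₀ := PathConnectedSpace.somePath _ _
  let K : I × CubeSphere d → X := fun p ↦
    if 0 ≤ p.2.1.1 then φ (collapse p.2) else γ.extend (-(p.1 * p.2.1.1))
  have hK : Continuous K := by
    refine Continuous.if_le (by fun_prop) (γ.continuous_extend.comp (by fun_prop)) (by fun_prop)
      (by fun_prop) fun p hp ↦ ?_
    simp [← hp, collapse_eq_bottomCenter (Or.inr hp.ge)]
  let τ : C(CubeSphere d, X) := ⟨fun w ↦ K (1, w), by fun_prop⟩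
  have hτ : (φ.comp collapse).Homotopic τ := ⟨⟨⟨K, hK⟩, fun w ↦ by
    by_cases hw : 0 ≤ w.1.1
    · simp [K, hw]
    · simp [K, hw, collapse_eq_bottomCenter (Or.inr (not_le.1 hw).le)], fun w ↦ rfl⟩⟩
  exact ⟨τ, (((Homotopic.refl φ).comp collapse_homotopic_id).symm).trans hτ, by
    simpa [τ, K, bottomCenter, show ¬ (0 : ℝ) ≤ -1 by norm_num] using γ.extend_one⟩

/-- The affine chart `[0, 1]^d → [-1, 1]^d` onto the top face. -/
def topFace : C(I^(Fin d), CubeSphere d) where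
  toFun y := ⟨(1, fun i ↦ 2 * (y i : ℝ) - 1), by
    have : ‖fun i ↦ 2 * (y i : ℝ) - 1‖ ≤ 1 := (pi_norm_le_iff_of_nonneg zero_le_one).2 fun i ↦ by
      rw [Real.norm_eq_abs, abs_le]
      constructor <;> linarith [(y i).2.1, (y i).2.2]
    simp [Prod.norm_def, this]⟩
  continuous_toFun := by fun_prop

lemma norm_snd_topFace_eq_one {y : I^(Fin d)} (hy : y ∈ Cube.boundary (Fin d)) :
    ‖(topFace y).1.2‖ = 1 := by
  obtain ⟨i, hi⟩ := hy
  refine le_antisymm ((norm_snd_le _).trans_eq (mem_sphere_zero_iff_norm.1 (topFace y).2)) ?_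
  calc (1 : ℝ) = ‖(topFace y).1.2 i‖ := by rcases hi with hi | hi <;> norm_num [topFace, hi]
    _ ≤ ‖(topFace y).1.2‖ := norm_le_pi_norm _ i

/-- The inverse of `topFace`, extended to `ℝ^d` by clamping each coordinate. -/
def cubeCoord : C(Fin d → ℝ, I^(Fin d)) where
  toFun v i := projIcc 0 1 zero_le_one ((v i + 1) / 2)
  continuous_toFun := by fun_prop

lemma snd_topFace_cubeCoord {v : Fin d → ℝ} (hv : ‖v‖ ≤ 1) :
    (topFace (cubeCoord v)).1.2 = v := by
  funext i
  have hvi := abs_le.1 ((norm_le_pi_norm v i).trans hv)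
  simp only [topFace, cubeCoord, coe_mk]
  rw [projIcc_of_mem _ ⟨by linarith, by linarith⟩]
  ring

lemma cubeCoord_mem_boundary {v : Fin d → ℝ} (hv : ‖v‖ = 1) :
    cubeCoord v ∈ Cube.boundary (Fin d) := by
  by_contra hint
  have hlt : ∀ i, ‖v i‖ < 1 := fun i ↦ by
    obtain ⟨h0, h1⟩ := not_or.1 (not_exists.1 hint i)
    simp only [cubeCoord, coe_mk, projIcc_eq_zero, projIcc_eq_one, not_le] at h0 h1
    exact abs_lt.2 ⟨by linarith, by linarith⟩
  exact ((pi_norm_lt_iff zero_lt_one).2 hlt).ne hv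

lemma nullhomotopic_of_subsingleton_homotopyGroup_of_forall_eq {x₀ : X}
    [Subsingleton (HomotopyGroup.Pi d X x₀)] {φ : C(CubeSphere d, X)}
    (hφ : ∀ w, ‖w.1.2‖ = 1 ∨ w.1.1 ≤ 0 → φ w = x₀) : φ.Nullhomotopic := by
  let f : Ω^ (Fin d) X x₀ := ⟨φ.comp topFace, fun y hy ↦ hφ _ (Or.inl (norm_snd_topFace_eq_one hy))⟩
  obtain ⟨H⟩ : GenLoop.Homotopic f GenLoop.const :=
    Quotient.exact (s := GenLoop.Homotopic.setoid (Fin d) x₀)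
      (Subsingleton.elim (α := HomotopyGroup.Pi d X x₀) _ _)
  let F : C(ℝ × (Fin d → ℝ), X) :=
    ⟨fun w ↦ H (projIcc 0 1 zero_le_one ((1 - w.1) / 2), cubeCoord w.2), by fun_prop⟩
  refine nullhomotopic_of_exists_extension ⟨F, fun w ↦ ?_⟩
  rcases abs_fst_eq_one_or_norm_snd_eq_one w with hw | hw
  · rcases eq_or_eq_neg_of_abs_eq hw with hw | hw
    · have hv : ‖w.1.2‖ ≤ 1 := (norm_snd_le _).trans_eq (mem_sphere_zero_iff_norm.1 w.2)
      have htop : topFace (cubeCoord w.1.2) = w :=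
        Subtype.ext (Prod.ext hw.symm (snd_topFace_cubeCoord hv))
      simp [F, hw, f, htop]
    · rw [hφ w (Or.inr (by linarith))]
      simp only [F, hw, coe_mk]
      norm_num
  · rw [hφ w (Or.inl hw)]
    exact (H.eq_fst _ (cubeCoord_mem_boundary hw)).trans (f.2 _ (cubeCoord_mem_boundary hw))

theorem nullhomotopic_of_subsingleton_homotopyGroup [PathConnectedSpace X] (x₀ : X)
    [Subsingleton (HomotopyGroup.Pi d X x₀)] (φ : C(CubeSphere d, X)) : φ.Nullhomotopic := by
  obtain ⟨τ, hφτ, hτ⟩ := exists_homotopic_apply_bottomCenter_eq φ x₀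
  obtain ⟨c, hc⟩ := nullhomotopic_of_subsingleton_homotopyGroup_of_forall_eq
    (x₀ := x₀) (φ := τ.comp collapse) fun w hw ↦ by simp [collapse_eq_bottomCenter hw, hτ]
  have hcollapse : τ.Homotopic (τ.comp collapse) :=
    (Homotopic.refl τ).comp collapse_homotopic_id.symm
  exact ⟨c, (hφτ.trans hcollapse).trans hc⟩

end CubeSphere

section LogLift

open Set Topology

lemma eqOn_of_exp_comp_eqOn {X : Type*} [TopologicalSpace X] {S : Set X} {f g : X → ℂ}
    (hS : IsPreconnected S) (hf : ContinuousOn f S) (hg : ContinuousOn g S)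
    (hfg : EqOn (Complex.exp ∘ f) (Complex.exp ∘ g) S) {a : X} (ha : a ∈ S) (hfga : f a = g a) :
    EqOn f g S := by
  have hexp : IsLocallyInjective Complex.exp := fun x ↦
    (Complex.isCoveringMap_exp.isLocalHomeomorph.isLocallyInjective x).imp fun U hU ↦
      ⟨hU.1, hU.2.1, fun a ha b hb hab ↦ hU.2.2 ha hb (Subtype.ext hab)⟩
  exact (T2Space.isSeparatedMap Complex.exp).eqOn_of_comp_eqOn hexp hS hf hg hfg ha hfga

lemma exists_continuous_exp_eq {E : Type*} [NormedAddCommGroup E] [NormedSpace ℝ E] {f : E → ℂ}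
    (hf : Continuous f) (hf₀ : ∀ x, f x ≠ 0) :
    ∃ g : E → ℂ, Continuous g ∧ ∀ x, Complex.exp (g x) = f x := by
  have : ContractibleSpace (univ : Set E) := convex_univ.contractibleSpace univ_nonempty
  have hsc : IsSimplyConnected (univ : Set E) := inferInstanceAs (SimplyConnectedSpace _)
  obtain ⟨g, hg, hgf⟩ := Complex.exists_continuousOn_eqOn_exp_comp hsc isOpen_univ
    hf.continuousOn (by rintro ⟨x, -, hx⟩; exact hf₀ x hx)
  exact ⟨g, continuousOn_univ.1 hg, fun x ↦ hgf (mem_univ x)⟩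

lemma exists_continuous_exp_eq_and_eqOn_log {E : Type*} [NormedAddCommGroup E] [NormedSpace ℝ E]
    {f : E → ℂ} (hf : Continuous f) (hf₀ : ∀ x, f x ≠ 0) {S : Set E} (hS : IsPreconnected S)
    (hSf : MapsTo f S Complex.slitPlane) :
    ∃ g : E → ℂ, Continuous g ∧ (∀ x, Complex.exp (g x) = f x) ∧
      EqOn g (fun x ↦ Complex.log (f x)) S := by
  obtain ⟨g, hg, hgf⟩ := exists_continuous_exp_eq hf hf₀
  obtain rfl | ⟨w, hw⟩ := S.eq_empty_or_nonempty
  · exact ⟨g, hg, hgf, eqOn_empty _ _⟩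
  let shifted : E → ℂ := fun x ↦ g x + (Complex.log (f w) - g w)
  have hexp : ∀ x, Complex.exp (shifted x) = f x := fun x ↦ by
    rw [Complex.exp_add, Complex.exp_sub, Complex.exp_log (hf₀ w), hgf, hgf, div_self (hf₀ w),
      mul_one]
  have hshifted : Continuous shifted := hg.add continuous_const
  refine ⟨shifted, hshifted, hexp, eqOn_of_exp_comp_eqOn hS hshifted.continuousOn
    (hf.continuousOn.clog hSf) (fun x _ ↦ ?_) hw (add_sub_cancel _ _)⟩
  simp only [Function.comp_apply, hexp, Complex.exp_log (hf₀ x)]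

end LogLift

section Complement

open Set

variable {ℓ n : ℕ}

/-- The real part of a vector of `ℂ^ℓ`, as a real-linear map. -/
def reVec (ℓ : ℕ) : (Fin ℓ → ℂ) →ₗ[ℝ] Vsp ℓ where
  toFun z := WithLp.toLp 2 fun j ↦ (z j).re
  map_add' z w := by ext; simp
  map_smul' c z := by ext; simp

/-- The imaginary part of a vector of `ℂ^ℓ`, as a real-linear map. -/
def imVec (ℓ : ℕ) : (Fin ℓ → ℂ) →ₗ[ℝ] Vsp ℓ where
  toFun z := WithLp.toLp 2 fun j ↦ (z j).im
  map_add' z w := by ext; simp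
  map_smul' c z := by ext; simp

/-- The vector `x + iy` of `ℂ^ℓ` with real part `x` and imaginary part `y`. -/
def complexVec (x y : Vsp ℓ) : Fin ℓ → ℂ := fun j ↦ ⟨x j, y j⟩

@[simp]
lemma reVec_complexVec (x y : Vsp ℓ) : reVec ℓ (complexVec x y) = x := rfl

@[simp]
lemma imVec_complexVec (x y : Vsp ℓ) : imVec ℓ (complexVec x y) = y := rfl

lemma continuous_complexVec {X : Type*} [TopologicalSpace X] {x y : X → Vsp ℓ}
    (hx : Continuous x) (hy : Continuous y) : Continuous fun w ↦ complexVec (x w) (y w) := by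
  have hcoord : ∀ j, Continuous fun w ↦ (x w j, y w j) := fun j ↦ by fun_prop
  exact continuous_pi fun j ↦ Complex.equivRealProdCLM.symm.continuous.comp (hcoord j)

@[simp]
lemma re_cLin (f : Vsp ℓ →ₗ[ℝ] ℝ) (z : Fin ℓ → ℂ) : (cLin f z).re = f (reVec ℓ z) := by
  simp [cLin, reVec]

@[simp]
lemma im_cLin (f : Vsp ℓ →ₗ[ℝ] ℝ) (z : Fin ℓ → ℂ) : (cLin f z).im = f (imVec ℓ z) := by
  simp [cLin, imVec]

lemma cLin_add (f : Vsp ℓ →ₗ[ℝ] ℝ) (z w : Fin ℓ → ℂ) :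
    cLin f (z + w) = cLin f z + cLin f w := by
  apply Complex.ext <;> simp

lemma cLin_smul (f : Vsp ℓ →ₗ[ℝ] ℝ) (c : ℂ) (z : Fin ℓ → ℂ) :
    cLin f (c • z) = c * cLin f z := by
  have hre : reVec ℓ (c • z) = c.re • reVec ℓ z - c.im • imVec ℓ z := by
    ext; simp [reVec, imVec]
  have him : imVec ℓ (c • z) = c.re • imVec ℓ z + c.im • reVec ℓ z := by
    ext; simp [reVec, imVec]
  apply Complex.ext <;> simp [hre, him]

lemma continuous_cLin (f : Vsp ℓ →ₗ[ℝ] ℝ) : Continuous (cLin f) :=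
  LinearMap.continuous_of_finiteDimensional
    ({ toFun := cLin f, map_add' := cLin_add f, map_smul' := cLin_smul f } :
      (Fin ℓ → ℂ) →ₗ[ℂ] ℂ)

lemma smul_cLin (c : ℝ) (f : Vsp ℓ →ₗ[ℝ] ℝ) (z : Fin ℓ → ℂ) : cLin (c • f) z = c * cLin f z := by
  apply Complex.ext <;> simp

lemma MA_smul (α : Fin n → (Vsp ℓ →ₗ[ℝ] ℝ)) {ε : Fin n → ℝ} (hε : ∀ j, ε j ≠ 0) :
    MA (fun j ↦ ε j • α j) = MA α := by
  ext z
  simp [MA, smul_cLin, hε]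

lemma exists_forall_apply_ne_zero {V ι : Type*} [AddCommGroup V] [Module ℝ V]
    [Finite ι] {α : ι → (V →ₗ[ℝ] ℝ)} (hα : ∀ j, α j ≠ 0) : ∃ x, ∀ j, α j x ≠ 0 :=
  Module.Dual.exists_forall_ne_zero_of_forall_exists α fun j ↦
    DFunLike.ne_iff.1 (hα j)

lemma nonempty_MA {α : Fin n → (Vsp ℓ →ₗ[ℝ] ℝ)} (hα : ∀ j, α j ≠ 0) : (MA α).Nonempty := by
  obtain ⟨x, hx⟩ := exists_forall_apply_ne_zero hα
  exact ⟨complexVec x 0, fun j hj ↦ hx j (by simpa using congrArg Complex.re hj)⟩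

lemma countable_setOf_cLin_add_smul_eq_zero {f : Vsp ℓ →ₗ[ℝ] ℝ} {z : Fin ℓ → ℂ}
    (hz : cLin f z ≠ 0) (v : Fin ℓ → ℂ) : {t : ℂ | cLin f (z + t • v) = 0}.Countable := by
  refine Set.Subsingleton.countable fun s hs t ht ↦ ?_
  simp only [mem_ofPred_eq, cLin_add, cLin_smul] at hs ht
  have hv : cLin f v ≠ 0 := fun hv ↦ hz (by simpa [hv] using hs)
  exact mul_right_cancel₀ hv (by linear_combination hs - ht)

lemma isPathConnected_MA {α : Fin n → (Vsp ℓ →ₗ[ℝ] ℝ)} (hne : (MA α).Nonempty) :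
    IsPathConnected (MA α) := by
  obtain ⟨z, hz⟩ := hne
  refine ⟨z, hz, fun {w} hw ↦ ?_⟩
  let line : ℂ → Fin ℓ → ℂ := fun t ↦ z + t • (w - z)
  have hline : Continuous line := by fun_prop
  have hcountable : (⋃ i, {t : ℂ | cLin (α i) (line t) = 0}).Countable :=
    countable_iUnion fun i ↦ countable_setOf_cLin_add_smul_eq_zero (hz i) _
  have hconn := hcountable.isPathConnected_compl_of_one_lt_rank
    (by rw [Complex.rank_real_complex]; norm_num)
  have hcompl : (⋃ i, {t : ℂ | cLin (α i) (line t) = 0})ᶜ = line ⁻¹' MA α := by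
    ext t; simp [MA]
  rw [hcompl] at hconn
  have hjoined := (hconn.joinedIn 0 (by simpa [line] using hz) 1
    (by simpa [line] using hw)).map_continuousOn hline.continuousOn
  simpa [line] using hjoined.mono (image_preimage_subset _ _)

end Complement

section SphereInComplement

open Set Metric Topology Filter

variable {ℓ n : ℕ} {α : Fin n → (Vsp ℓ →ₗ[ℝ] ℝ)}

lemma exists_continuous_forall_apply_pos {V X : Type*} [NormedAddCommGroup V] [NormedSpace ℝ V]
    [FiniteDimensional ℝ V] [TopologicalSpace X] [NormalSpace X] [ParacompactSpace X] {ι : Type*}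
    [Finite ι] (α : ι → (V →ₗ[ℝ] ℝ)) {x : X → V} (hx : Continuous x)
    (hpos : ∀ w, ∃ y, ∀ j, α j (x w) = 0 → 0 < α j y) :
    ∃ y : C(X, V), ∀ w j, α j (x w) = 0 → 0 < α j (y w) := by
  refine exists_continuous_forall_mem_convex_of_local_const
    (t := fun w ↦ {y | ∀ j, α j (x w) = 0 → 0 < α j y}) (fun w ↦ ?_) fun w ↦ ?_
  · simp only [ofPred_forall]
    exact convex_iInter₂ fun j _ ↦ (convex_Ioi (0 : ℝ)).linear_preimage (α j)
  · obtain ⟨y, hy⟩ := hpos w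
    refine ⟨y, eventually_all.2 fun j ↦ ?_⟩
    by_cases hj : α j (x w) = 0
    · exact .of_forall fun _ _ ↦ hy j hj
    · have hcont : Continuous fun v ↦ α j (x v) := (α j).continuous_of_finiteDimensional.comp hx
      exact (hcont.continuousAt.eventually_ne hj).mono fun v hv h ↦ absurd h hv

lemma complexVec_mem_MA {x y : Vsp ℓ} (h : ∀ j, α j x = 0 → 0 < α j y) :
    complexVec x y ∈ MA α := fun j hj ↦
  (h j (by simpa using congrArg Complex.re hj)).ne' (by simpa using congrArg Complex.im hj)

lemma neg_I_mul_cLin_mem_slitPlane {f : Vsp ℓ →ₗ[ℝ] ℝ} {z : Fin ℓ → ℂ}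
    (h : f (reVec ℓ z) = 0 → 0 < f (imVec ℓ z)) :
    -Complex.I * cLin f z ∈ Complex.slitPlane := by
  rw [Complex.mem_slitPlane_iff]
  by_cases hz : f (reVec ℓ z) = 0
  · exact .inl (by simpa using h hz)
  · exact .inr (by simpa using hz)

lemma arg_neg_I_mul_cLin_nonneg_iff (f : Vsp ℓ →ₗ[ℝ] ℝ) (z : Fin ℓ → ℂ) :
    0 ≤ (-Complex.I * cLin f z).arg ↔ f (reVec ℓ z) ≤ 0 := by
  simp [Complex.arg_nonneg_iff]

lemma apply_reVec_smul_of_exp_eq {f : Vsp ℓ →ₗ[ℝ] ℝ} {z : Fin ℓ → ℂ} {g : ℂ}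
    (hg : Complex.exp g = -Complex.I * cLin f z) :
    f (reVec ℓ ((Complex.I * Complex.exp (-(g.im * Complex.I))) • z)) = -Real.exp g.re := by
  have hz : cLin f z = Complex.I * Complex.exp g := by
    rw [hg, ← mul_assoc, mul_neg, Complex.I_mul_I, neg_neg, one_mul]
  have hexp : Complex.exp (-(g.im * Complex.I)) * Complex.exp g = Real.exp g.re := by
    rw [← Complex.exp_add, Complex.ofReal_exp]
    congr 1
    linear_combination -(Complex.re_add_im g)
  rw [← re_cLin, cLin_smul, hz, mul_mul_mul_comm, Complex.I_mul_I, hexp,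
    neg_one_mul, Complex.neg_re, Complex.ofReal_re]

lemma exists_continuous_rotation {E : Type*} [NormedAddCommGroup E] [NormedSpace ℝ E]
    (hE : 1 < Module.rank ℝ E) {F : E → Fin ℓ → ℂ} (hF : Continuous F) (hFα : ∀ x, F x ∈ MA α)
    (hpos : ∀ w ∈ sphere (0 : E) 1, ∀ j, α j (reVec ℓ (F w)) = 0 → 0 < α j (imVec ℓ (F w)))
    (hneg : ∀ x, ∃ j, α j x ≤ 0) :
    ∃ Φ : E → Vsp ℓ, Continuous Φ ∧ (∀ x, ∃ j, α j (Φ x) < 0) ∧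
      ∀ w ∈ sphere (0 : E) 1, ∃ j, α j (Φ w) < 0 ∧ α j (reVec ℓ (F w)) ≤ 0 := by
  have hf : ∀ j, Continuous fun x ↦ -Complex.I * cLin (α j) (F x) := fun j ↦
    continuous_const.mul ((continuous_cLin _).comp hF)
  choose g hg hgexp hglog using fun j ↦ exists_continuous_exp_eq_and_eqOn_log (hf j)
    (fun x ↦ mul_ne_zero (neg_ne_zero.2 Complex.I_ne_zero) (hFα x j))
    (isPreconnected_sphere hE 0 1) fun w hw ↦ neg_I_mul_cLin_mem_slitPlane (hpos w hw j)
  have hnonempty : (Finset.univ : Finset (Fin n)).Nonempty := ⟨(hneg 0).choose, Finset.mem_univ _⟩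
  let ψ : E → ℝ := fun x ↦ Finset.univ.sup' hnonempty fun j ↦ (g j x).im
  have hψ : Continuous ψ :=
    Continuous.finset_sup'_apply hnonempty fun j _ ↦ Complex.continuous_im.comp (hg j)
  let Φ : E → Vsp ℓ := fun x ↦ reVec ℓ ((Complex.I * Complex.exp (-(ψ x * Complex.I))) • F x)
  have hΦneg : ∀ x j, ψ x = (g j x).im → α j (Φ x) < 0 := fun x j hj ↦ by
    simpa only [Φ, hj, apply_reVec_smul_of_exp_eq (hgexp j x)] using neg_neg_of_pos (Real.exp_pos _)
  have hmax : ∀ x, ∃ j, ψ x = (g j x).im := fun x ↦ by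
    obtain ⟨j, -, hj⟩ := Finset.exists_mem_eq_sup' hnonempty fun j ↦ (g j x).im
    exact ⟨j, hj⟩
  refine ⟨Φ, (reVec ℓ).continuous_of_finiteDimensional.comp (by fun_prop),
    fun x ↦ (hmax x).imp fun j ↦ hΦneg x j, fun w hw ↦ ?_⟩
  have hθ : ∀ j, 0 ≤ (g j w).im ↔ α j (reVec ℓ (F w)) ≤ 0 := fun j ↦ by
    rw [hglog j hw, Complex.log_im, arg_neg_I_mul_cLin_nonneg_iff]
  obtain ⟨j, hj⟩ := hmax w
  obtain ⟨k, hk⟩ := hneg (reVec ℓ (F w))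
  have hkj : (g k w).im ≤ ψ w := Finset.le_sup' (fun j ↦ (g j w).im) (Finset.mem_univ k)
  exact ⟨j, hΦneg w j hj, (hθ j).1 (hj ▸ ((hθ k).2 hk).trans hkj)⟩

lemma not_nullhomotopic_of_reVec_eq {E : Type*} [NormedAddCommGroup E] [NormedSpace ℝ E]
    (hE : 1 < Module.rank ℝ E) (L : E ≃L[ℝ] Vsp ℓ) {φ : C(sphere (0 : E) 1, MA α)}
    (hre : ∀ w, reVec ℓ (φ w) = L w)
    (hpos : ∀ w : sphere (0 : E) 1, ∀ j, α j (L w) = 0 → 0 < α j (imVec ℓ (φ w)))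
    (hneg : ∀ x, ∃ j, α j x ≤ 0) : ¬ φ.Nullhomotopic := by
  intro hφ
  obtain ⟨F, hFφ⟩ := exists_extension_of_nullhomotopic hφ
  obtain ⟨Φ, hΦ, hΦneg, hΦsphere⟩ := exists_continuous_rotation hE (F := fun x ↦ F x)
    (by fun_prop) (fun x ↦ (F x).2)
    (fun w hw j hj ↦ by
      rw [hFφ ⟨w, hw⟩, hre] at hj
      simpa only [hFφ ⟨w, hw⟩] using hpos ⟨w, hw⟩ j hj) hneg
  have : FiniteDimensional ℝ E := L.symm.toLinearEquiv.finiteDimensional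
  have hray : ∀ w, ‖w‖ = 1 → ¬ SameRay ℝ (L.symm (Φ w)) (-w) := fun w hw hray ↦ by
    obtain ⟨j, hΦj, hj⟩ := hΦsphere w (mem_sphere_zero_iff_norm.2 hw)
    rw [hFφ ⟨w, mem_sphere_zero_iff_norm.2 hw⟩, hre] at hj
    have hΦw : L.symm (Φ w) ≠ 0 := fun h ↦ by simp_all
    obtain ⟨r, hr, hrw⟩ := hray.exists_pos_left hΦw
      (neg_ne_zero.2 (norm_ne_zero_iff.1 (hw ▸ one_ne_zero)))
    have hαj : r * α j (Φ w) = -α j (L w) := by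
      simpa using congrArg (fun v ↦ α j (L v)) hrw
    linarith [mul_neg_of_pos_of_neg hr hΦj]
  obtain ⟨x, hx⟩ := exists_eq_zero_of_forall_not_sameRay_neg (L.symm.continuous.comp hΦ) hray
  obtain ⟨j, hj⟩ := hΦneg x
  have hΦx : Φ x = 0 := by simpa using hx
  simp [hΦx] at hj

theorem nontrivial_homotopyGroup_of_forall_exists_apply_pos {d : ℕ} (hd : 1 ≤ d)
    {α : Fin n → (Vsp (d + 1) →ₗ[ℝ] ℝ)}
    (hpos : ∀ x ≠ 0, ∃ y, ∀ j, α j x = 0 → 0 < α j y) (hneg : ∀ x, ∃ j, α j x ≤ 0) (x₀ : MA α) :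
    Nontrivial (HomotopyGroup.Pi d (MA α) x₀) := by
  have hrank : Module.finrank ℝ (ℝ × (Fin d → ℝ)) = d + 1 := by simp [add_comm]
  let L : (ℝ × (Fin d → ℝ)) ≃L[ℝ] Vsp (d + 1) := .ofFinrankEq (by simp [add_comm])
  have hL : Continuous fun w : CubeSphere d ↦ L w := by fun_prop
  obtain ⟨y, hy⟩ := exists_continuous_forall_apply_pos α hL fun w ↦ hpos _ <| by
    simpa using ne_of_mem_sphere w.2 one_ne_zero
  let φ : C(CubeSphere d, MA α) :=
    ⟨fun w ↦ ⟨complexVec (L w) (y w), complexVec_mem_MA (hy w)⟩,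
      (continuous_complexVec hL y.continuous).subtype_mk _⟩
  have : PathConnectedSpace (MA α) :=
    isPathConnected_iff_pathConnectedSpace.1 (isPathConnected_MA ⟨x₀, x₀.2⟩)
  rw [← not_subsingleton_iff_nontrivial]
  intro _
  refine not_nullhomotopic_of_reVec_eq ?_ L (φ := φ) (fun w ↦ rfl) hy hneg
    (nullhomotopic_of_subsingleton_homotopyGroup x₀ φ)
  rw [← Module.finrank_eq_rank, hrank]
  exact_mod_cast Nat.lt_succ_of_le hd

theorem nontrivial_homotopyGroup_of_locallyConsistent {d : ℕ} (hd : 1 ≤ d)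
    {α : Fin n → (Vsp (d + 1) →ₗ[ℝ] ℝ)} {ε : Fin n → ℝ} (hε : ∀ j, ε j ≠ 0)
    (hlocal : LocallyConsistent α ε) (hglobal : (⋂ j, {x | 0 < ε j * α j x}) = ∅) (x₀ : MA α) :
    Nontrivial (HomotopyGroup.Pi d (MA α) x₀) := by
  classical
  revert x₀
  rw [← MA_smul α hε]
  refine nontrivial_homotopyGroup_of_forall_exists_apply_pos hd (fun x hx ↦ ?_) fun x ↦ ?_
  · let I := Finset.univ.filter fun j ↦ α j x = 0
    have hxI : x ∈ ⋂ i ∈ I, (LinearMap.ker (α i) : Set _) := by simp [I]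
    obtain ⟨y, hy⟩ := hlocal I fun hI ↦ hx (by rwa [hI] at hxI)
    refine ⟨y, fun j hj ↦ hy j ?_⟩
    exact biInter_subset_of_mem (by simpa [I, hε] using hj)
  · by_contra! hx
    exact notMem_empty x (hglobal ▸ mem_iInter.2 hx)

end SphereInComplement

section GenericHyperplane

open Set Topology Filter

lemma exists_forall_apply_ne_zero_and_mul_nonneg {V ι : Type*} [AddCommGroup V] [Module ℝ V]
    [Finite ι] {α : ι → (V →ₗ[ℝ] ℝ)} (hα : ∀ j, α j ≠ 0) (q : V) :
    ∃ p, ∀ j, α j p ≠ 0 ∧ 0 ≤ α j q * α j p := by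
  obtain ⟨v, hv⟩ := exists_forall_apply_ne_zero hα
  suffices ∀ᶠ t : ℝ in 𝓝[≠] 0, ∀ j, α j (q + t • v) ≠ 0 ∧ 0 ≤ α j q * α j (q + t • v) from
    this.exists.elim fun t ht ↦ ⟨_, ht⟩
  refine eventually_all.2 fun j ↦ ?_
  by_cases hj : α j q = 0
  · filter_upwards [self_mem_nhdsWithin] with t ht
    simpa [hj, hv j] using ht
  · have hcont : ContinuousAt (fun t : ℝ ↦ α j q * α j (q + t • v)) 0 := by
      simp only [map_add, map_smul]; fun_prop
    have hpos : 0 < α j q * α j (q + (0 : ℝ) • v) := by simpa using hj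
    filter_upwards [nhdsWithin_le_nhds (hcont.eventually_const_lt hpos)] with t ht
    exact ⟨right_ne_zero_of_mul ht.ne', ht.le⟩

lemma span_range_eq_top_of_iInter_ker_eq {V ι : Type*} [AddCommGroup V] [Module ℝ V]
    [FiniteDimensional ℝ V] {α : ι → (V →ₗ[ℝ] ℝ)}
    (hess : (⋂ i, (LinearMap.ker (α i) : Set V)) = {0}) :
    Submodule.span ℝ (range α) = (⊤ : Submodule ℝ (Module.Dual ℝ V)) := by
  refine Submodule.span_eq_top_of_ne_zero fun x hx ↦ ?_
  by_contra! h
  exact hx (hess.subset (mem_iInter.2 fun i ↦ h _ (mem_range_self i)))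

lemma exists_chamber_forall_apply_pos {V ι : Type*} [AddCommGroup V] [Module ℝ V]
    [FiniteDimensional ℝ V] [Finite ι] {α : ι → (V →ₗ[ℝ] ℝ)} {β : V →ₗ[ℝ] ℝ} (hα : ∀ j, α j ≠ 0)
    (hess : (⋂ i, (LinearMap.ker (α i) : Set V)) = {0}) (hβ : β ≠ 0) :
    ∃ p, (∀ j, α j p ≠ 0) ∧ ∀ x, (∀ j, 0 < α j p * α j x) → 0 < β x := by
  obtain ⟨κ, a, ha, hspan, hli⟩ := exists_linearIndependent' ℝ α
  have : Finite κ := Finite.of_injective a ha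
  have := Fintype.ofFinite κ
  let b : Module.Basis κ ℝ (Module.Dual ℝ V) :=
    .mk hli (hspan.trans (span_range_eq_top_of_iInter_ker_eq hess)).ge
  have hb : ∀ k, b k = α (a k) := fun k ↦ by simp [b]
  have hβx : ∀ x, β x = ∑ k, b.repr β k * α (a k) x := fun x ↦ by
    simpa [hb] using (DFunLike.congr_fun (b.sum_repr β) x).symm
  obtain ⟨k₀, hk₀⟩ : ∃ k, b.repr β k ≠ 0 := by
    by_contra! h
    exact hβ (b.repr.map_eq_zero_iff.1 (Finsupp.ext h))
  -- `q` lies on the side of `b k` prescribed by the sign of the `b k`-coordinate of `β`.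
  let q : V := (Module.evalEquiv ℝ V).symm (b.constr ℝ (b.repr β))
  have hq : ∀ k, α (a k) q = b.repr β k := fun k ↦ by
    rw [← hb, Module.apply_evalEquiv_symm_apply, Module.Basis.constr_basis]
  obtain ⟨p, hp⟩ := exists_forall_apply_ne_zero_and_mul_nonneg hα q
  have hterm : ∀ x, (∀ j, 0 < α j p * α j x) → ∀ k, b.repr β k ≠ 0 →
      0 < b.repr β k * α (a k) x := fun x hx k hk ↦ by
    have hqp : 0 < b.repr β k * α (a k) p :=
      (hq k ▸ (hp (a k)).2).lt_of_ne' (mul_ne_zero hk (hp (a k)).1)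
    have hprod : 0 < α (a k) p ^ 2 * (b.repr β k * α (a k) x) := by
      linear_combination mul_pos hqp (hx (a k))
    exact pos_of_mul_pos_right hprod (sq_nonneg _)
  refine ⟨p, fun j ↦ (hp j).1, fun x hx ↦ ?_⟩
  rw [hβx]
  refine Finset.sum_pos' (fun k _ ↦ ?_) ⟨k₀, Finset.mem_univ _, hterm x hx k₀ hk₀⟩
  by_cases hk : b.repr β k = 0
  · simp [hk]
  · exact (hterm x hx k hk).le

variable {ℓ n : ℕ} {α : Fin n → (Vsp ℓ →ₗ[ℝ] ℝ)} {β : Vsp ℓ →ₗ[ℝ] ℝ} {p : Vsp ℓ}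

/-- The system of half-spaces of `A ∪ {ker β}` formed by the sides of the hyperplanes of `A` that
contain `p` and by the negative side of `ker β`. -/
def chamberSigns (α : Fin n → (Vsp ℓ →ₗ[ℝ] ℝ)) (p : Vsp ℓ) : Fin (n + 1) → ℝ :=
  Fin.snoc (fun j ↦ (SignType.sign (α j p) : ℝ)) (-1)

lemma sign_mul_pos_iff {a b : ℝ} : 0 < (SignType.sign a : ℝ) * b ↔ 0 < a * b := by
  rcases lt_trichotomy a 0 with ha | rfl | ha
  · simp [ha, mul_pos_iff, ha.not_gt]
  · simp
  · simp [ha]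

lemma chamberSigns_eq_one_or (hp : ∀ j, α j p ≠ 0) (j : Fin (n + 1)) :
    chamberSigns α p j = 1 ∨ chamberSigns α p j = -1 := by
  cases j using Fin.lastCases with
  | last => simp [chamberSigns]
  | cast j => rcases lt_or_gt_of_ne (hp j) with h | h <;> simp [chamberSigns, h]

lemma forall_chamberSigns_mul_pos_iff {P : Fin (n + 1) → Prop} {x : Vsp ℓ} :
    (∀ j, P j → 0 < chamberSigns α p j * (Fin.snoc α β : Fin (n + 1) → (Vsp ℓ →ₗ[ℝ] ℝ)) j x) ↔
      (∀ j : Fin n, P j.castSucc → 0 < α j p * α j x) ∧ (P (Fin.last n) → β x < 0) := by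
  simp [Fin.forall_fin_succ', chamberSigns, sign_mul_pos_iff]

lemma locallyConsistent_chamberSigns (hp : ∀ j, α j p ≠ 0)
    (hgen : ∀ I : Finset (Fin n),
      (⋂ i ∈ I, (LinearMap.ker (α i) : Set (Vsp ℓ))) ≠ {0} →
      ¬ (⋂ i ∈ I, (LinearMap.ker (α i) : Set (Vsp ℓ))) ⊆ (LinearMap.ker β : Set (Vsp ℓ))) :
    LocallyConsistent (Fin.snoc α β : Fin (n + 1) → (Vsp ℓ →ₗ[ℝ] ℝ)) (chamberSigns α p) := by
  classical
  intro I hI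
  set X := ⋂ i ∈ I, (LinearMap.ker ((Fin.snoc α β : Fin (n + 1) → _) i) : Set (Vsp ℓ)) with hX
  let K := Finset.univ.filter fun j ↦ X ⊆ LinearMap.ker (α j)
  have hXK : X ⊆ ⋂ j ∈ K, LinearMap.ker (α j) := subset_iInter₂ fun j hj ↦ by simpa [K] using hj
  have hzero : (0 : Vsp ℓ) ∈ X := by simp [hX]
  obtain ⟨y, hyK, hyβ⟩ := not_subset.1 <| hgen K fun hK ↦
    hI ((hXK.trans hK.subset).antisymm (singleton_subset_iff.2 hzero))
  replace hyβ : β y ≠ 0 := hyβ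
  have hyα : ∀ j, X ⊆ LinearMap.ker (α j) → α j y = 0 := fun j hj ↦
    mem_iInter₂.1 hyK j (by simpa [K] using hj)
  refine ⟨p - ((β p + 1) / β y) • y, forall_chamberSigns_mul_pos_iff.2 ⟨fun j hj ↦ ?_, fun _ ↦ ?_⟩⟩
  · rw [Fin.snoc_castSucc] at hj
    simpa [hyα j hj] using hp j
  · simp [hyβ]

lemma iInter_chamberSigns_eq_empty (hβ : ∀ x, (∀ j, 0 < α j p * α j x) → 0 < β x) :
    (⋂ i, {x : Vsp ℓ | 0 < chamberSigns α p i *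
      (Fin.snoc α β : Fin (n + 1) → (Vsp ℓ →ₗ[ℝ] ℝ)) i x}) = ∅ := by
  refine eq_empty_of_forall_notMem fun x hx ↦ ?_
  have hsides := (forall_chamberSigns_mul_pos_iff (P := fun _ ↦ True)).1 fun j _ ↦ mem_iInter.1 hx j
  exact (hβ x fun j ↦ hsides.1 j trivial).not_gt (hsides.2 trivial)

end GenericHyperplane

/-- Adding a generic hyperplane destroys asphericity: if `ker β` is generic with
respect to the central essential arrangement `A` in `ℝ^ℓ` (`ℓ ≥ 3`), then
`A ∪ {ker β}` admits a locally consistent but globally inconsistent system of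
half-spaces; consequently `π_{ℓ-1} ≠ 0` and the complement is not aspherical. -/
theorem adding_generic_hyperplane_not_aspherical (ℓ n : ℕ) (hℓ : 3 ≤ ℓ)
    (α : Fin n → (Vsp ℓ →ₗ[ℝ] ℝ)) (β : Vsp ℓ →ₗ[ℝ] ℝ)
    (hα : ∀ i, α i ≠ 0)
    (hess : (⋂ i, (LinearMap.ker (α i) : Set (Vsp ℓ))) = {0})
    (hβ : β ≠ 0)
    (hgen : ∀ I : Finset (Fin n),
      (⋂ i ∈ I, (LinearMap.ker (α i) : Set (Vsp ℓ))) ≠ {0} →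
      ¬ (⋂ i ∈ I, (LinearMap.ker (α i) : Set (Vsp ℓ))) ⊆ (LinearMap.ker β : Set (Vsp ℓ))) :
    (∃ ε : Fin (n + 1) → ℝ, (∀ i, ε i = 1 ∨ ε i = -1) ∧
      LocallyConsistent ((Fin.snoc α β : Fin (n + 1) → (Vsp ℓ →ₗ[ℝ] ℝ))) ε ∧
      (⋂ i, {x : Vsp ℓ | 0 < ε i * (Fin.snoc α β : Fin (n + 1) → (Vsp ℓ →ₗ[ℝ] ℝ)) i x}) = ∅) ∧
    (∀ x₀ : MA ((Fin.snoc α β : Fin (n + 1) → (Vsp ℓ →ₗ[ℝ] ℝ))),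
      Nontrivial (HomotopyGroup.Pi (ℓ - 1) (MA ((Fin.snoc α β : Fin (n + 1) → (Vsp ℓ →ₗ[ℝ] ℝ)))) x₀)) ∧
    ¬ (∀ m : ℕ, 2 ≤ m → ∀ x₀ : MA ((Fin.snoc α β : Fin (n + 1) → (Vsp ℓ →ₗ[ℝ] ℝ))),
      Subsingleton (HomotopyGroup.Pi m (MA ((Fin.snoc α β : Fin (n + 1) → (Vsp ℓ →ₗ[ℝ] ℝ)))) x₀)) := by
  obtain ⟨p, hp, hpβ⟩ := exists_chamber_forall_apply_pos hα hess hβ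
  have hsigns := chamberSigns_eq_one_or hp
  have hlocal := locallyConsistent_chamberSigns hp hgen
  have hglobal := iInter_chamberSigns_eq_empty hpβ
  obtain ⟨d, rfl⟩ : ∃ d, ℓ = d + 1 := ⟨ℓ - 1, by omega⟩
  have hπ := nontrivial_homotopyGroup_of_locallyConsistent (by omega : 1 ≤ d)
    (fun j ↦ by rcases hsigns j with h | h <;> simp [h]) hlocal hglobal
  refine ⟨⟨_, hsigns, hlocal, hglobal⟩, hπ, fun hasph ↦ ?_⟩
  obtain ⟨z, hz⟩ := nonempty_MA (Fin.forall_fin_succ'.2 ⟨by simpa using hα, by simpa using hβ⟩ :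
    ∀ j, (Fin.snoc α β : Fin (n + 1) → (Vsp (d + 1) →ₗ[ℝ] ℝ)) j ≠ 0)
  exact not_subsingleton_iff_nontrivial.2 (hπ ⟨z, hz⟩) (hasph d (by omega) ⟨z, hz⟩)
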